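/- Let S and Q be separated C-structures, Rules a rule system over (ι, κ), and GS : κ → Set S, GQ : κ → Set Q prior interpretations each corresponding to the same GA : κ → Set P.M. Let ΦS and ΦQ be the operators induced by Rules relative to S with GS and to Q with GQ respectively. If a hyper-term t is a decomposition of a ∈ S and also a decomposition of b ∈ Q, then for every i : ι, a ∈ (gfp ΦS) i if and only if b ∈ (gfp ΦQ) i. -/

import Mathlib

open PFunctor

/-- The polynomial functor of a constructor vocabulary `C` with arities `arity`.
Hyper-terms over `C` are the elements of `(PF C arity).M`. -/
def PF (C : Type) (arity : C → ℕ) : PFunctor := ⟨C, fun c => Fin (arity c)⟩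

/-- A `C`-structure `interp` on `S` is *separated* if each constructor is interpreted
injectively and distinct constructors have disjoint ranges. -/
def Separated {C : Type} {arity : C → ℕ} {S : Type*}
    (interp : ∀ c : C, (Fin (arity c) → S) → S) : Prop :=
  (∀ c, Function.Injective (interp c)) ∧
    ∀ c d, c ≠ d → Disjoint (Set.range (interp c)) (Set.range (interp d))

/-- A decomposition relation between hyper-terms and elements of a `C`-structure. -/
def IsDecompRel {C : Type} {arity : C → ℕ} {S : Type*}
    (interp : ∀ c : C, (Fin (arity c) → S) → S)
    (R : (PF C arity).M → S → Prop) : Prop :=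
  ∀ t a, R t a → ∃ (c : C) (f : Fin (arity c) → (PF C arity).M) (b : Fin (arity c) → S),
    t = PFunctor.M.mk ⟨c, f⟩ ∧ a = interp c b ∧ ∀ i, R (f i) (b i)

/-- A hyper-term `t` is a decomposition of `a : S` if `R t a` for some
decomposition relation `R`. -/
def IsDecomposition {C : Type} {arity : C → ℕ} {S : Type*}
    (interp : ∀ c : C, (Fin (arity c) → S) → S)
    (t : (PF C arity).M) (a : S) : Prop :=
  ∃ R, IsDecompRel interp R ∧ R t a

/-- The canonical `C`-structure on hyper-terms. -/
def mkA {C : Type} {arity : C → ℕ} (c : C) (f : Fin (arity c) → (PF C arity).M) :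
    (PF C arity).M :=
  PFunctor.M.mk ⟨c, f⟩

/-- The monotone operator on `ι → Set S` induced by a rule system `Rules` relative to
a `C`-structure `interp` on `S` and prior interpretations `G : κ → Set S`. -/
def ruleOp {C : Type} {arity : C → ℕ} {S : Type*} {ι κ : Type*}
    (interp : ∀ c : C, (Fin (arity c) → S) → S)
    (Rules : Set (Σ _ : ι, Σ c : C, Fin (arity c) → ι ⊕ κ))
    (G : κ → Set S) : (ι → Set S) →o (ι → Set S) where
  toFun X i :=
    {a | ∃ r ∈ Rules, r.1 = i ∧ ∃ b : Fin (arity r.2.1) → S,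
      a = interp r.2.1 b ∧ ∀ j,
        (∀ i', r.2.2 j = Sum.inl i' → b j ∈ X i') ∧
        (∀ k, r.2.2 j = Sum.inr k → b j ∈ G k)}
  monotone' := by
    intro X Y hXY i a ha
    obtain ⟨r, hr, hi, b, hab, hj⟩ := ha
    exact ⟨r, hr, hi, b, hab, fun j =>
      ⟨fun i' h => hXY i' ((hj j).1 i' h), (hj j).2⟩⟩

/-- Prior interpretations `GS` on `S` and `GA` on hyper-terms correspond. -/
def Corresponds {C : Type} {arity : C → ℕ} {S : Type*} {κ : Type*}
    (interp : ∀ c : C, (Fin (arity c) → S) → S)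
    (GS : κ → Set S) (GA : κ → Set (PF C arity).M) : Prop :=
  (∀ k, ∀ a ∈ GS k, ∃ t, IsDecomposition interp t a ∧ t ∈ GA k) ∧
  (∀ k (t : (PF C arity).M) (a : S), t ∈ GA k → IsDecomposition interp t a → a ∈ GS k)

theorem IsDecomposition.cases' {C : Type} {arity : C → ℕ} {S : Type*}
    {interp : ∀ c : C, (Fin (arity c) → S) → S}
    {t : (PF C arity).M} {a : S} (h : IsDecomposition interp t a) :
    ∃ (c : C) (f : Fin (arity c) → (PF C arity).M) (b : Fin (arity c) → S),
      t = PFunctor.M.mk ⟨c, f⟩ ∧ a = interp c b ∧ ∀ i, IsDecomposition interp (f i) (b i) := by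
  obtain ⟨R, hR, hta⟩ := h
  obtain ⟨c, f, b, h1, h2, h3⟩ := hR t a hta
  exact ⟨c, f, b, h1, h2, fun i => ⟨R, hR, h3 i⟩⟩

theorem Separated.eq_con {C : Type} {arity : C → ℕ} {S : Type*}
    {interp : ∀ c : C, (Fin (arity c) → S) → S} (hs : Separated interp)
    {c d : C} {x : Fin (arity c) → S} {y : Fin (arity d) → S}
    (h : interp c x = interp d y) : c = d := by
  by_contra hne
  exact Set.disjoint_left.mp (hs.2 c d hne) ⟨x, rfl⟩ ⟨y, h.symm⟩

theorem IsDecomposition.unique {C : Type} {arity : C → ℕ} {S : Type*}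
    {interp : ∀ c : C, (Fin (arity c) → S) → S} (hs : Separated interp)
    {t u : (PF C arity).M} {a : S} (ht : IsDecomposition interp t a)
    (hu : IsDecomposition interp u a) : t = u := by
  refine PFunctor.M.bisim
    (fun x y => ∃ a, IsDecomposition interp x a ∧ IsDecomposition interp y a) ?_ t u ⟨a, ht, hu⟩
  rintro x y ⟨a, hx, hy⟩
  obtain ⟨c, f, b, rfl, hab, hf⟩ := hx.cases'
  obtain ⟨d, g, b', rfl, hab', hg⟩ := hy.cases'
  rw [hab] at hab'
  obtain rfl := hs.eq_con hab'
  obtain rfl := hs.1 _ hab'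
  exact ⟨c, f, g, PFunctor.M.dest_mk _, PFunctor.M.dest_mk _, fun i => ⟨b i, hf i, hg i⟩⟩

theorem gfp_mem_of_common_decomposition {C : Type} {arity : C → ℕ}
    {S Q : Type*} {ι κ : Type*}
    (interpS : ∀ c : C, (Fin (arity c) → S) → S) (hsepS : Separated interpS)
    (interpQ : ∀ c : C, (Fin (arity c) → Q) → Q)
    (Rules : Set (Σ _ : ι, Σ c : C, Fin (arity c) → ι ⊕ κ))
    (GS : κ → Set S) (GQ : κ → Set Q) (GA : κ → Set (PF C arity).M)
    (hcorrS : Corresponds interpS GS GA) (hcorrQ : Corresponds interpQ GQ GA)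
    (t : (PF C arity).M) (a : S) (b : Q)
    (ha : IsDecomposition interpS t a) (hb : IsDecomposition interpQ t b) (i : ι)
    (h : a ∈ OrderHom.gfp (ruleOp interpS Rules GS) i) :
    b ∈ OrderHom.gfp (ruleOp interpQ Rules GQ) i := by
  let X : ι → Set Q := fun i => {b | ∃ t a, IsDecomposition interpS t a ∧
    IsDecomposition interpQ t b ∧ a ∈ OrderHom.gfp (ruleOp interpS Rules GS) i}
  have hX : X ≤ ruleOp interpQ Rules GQ X := by
    rintro i b ⟨t, a, ha, hb, h⟩
    rw [← OrderHom.map_gfp] at h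
    obtain ⟨⟨i0, c, q⟩, hr, hi, x, hax, hj⟩ := h
    obtain ⟨d, f, x', rfl, hax', hf⟩ := ha.cases'
    obtain ⟨e, g, y, hfg, hby, hg⟩ := hb.cases'
    rw [hax] at hax'
    obtain rfl := hsepS.eq_con hax'
    obtain rfl := hsepS.1 _ hax'
    cases PFunctor.M.mk_inj hfg
    refine ⟨⟨i0, c, q⟩, hr, hi, y, hby, fun j => ⟨fun i' hq => ?_, fun k hq => ?_⟩⟩
    · exact ⟨f j, x j, hf j, hg j, (hj j).1 i' hq⟩
    · obtain ⟨u, hu, huG⟩ := hcorrS.1 k _ ((hj j).2 k hq)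
      obtain rfl := IsDecomposition.unique hsepS hu (hf j)
      exact hcorrQ.2 k _ _ huG (hg j)
  exact OrderHom.le_gfp _ hX i ⟨t, a, ha, hb, h⟩

/-- Corollary (coinductive case): elements of two separated `D`-correct structures with a
common decomposition have the same coinductive types. -/
theorem gfp_mem_iff_of_common_decomposition {C : Type} [Fintype C] {arity : C → ℕ}
    {S Q : Type*} {ι κ : Type*}
    (interpS : ∀ c : C, (Fin (arity c) → S) → S) (hsepS : Separated interpS)
    (interpQ : ∀ c : C, (Fin (arity c) → Q) → Q) (hsepQ : Separated interpQ)
    (Rules : Set (Σ _ : ι, Σ c : C, Fin (arity c) → ι ⊕ κ))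
    (GS : κ → Set S) (GQ : κ → Set Q) (GA : κ → Set (PF C arity).M)
    (hcorrS : Corresponds interpS GS GA) (hcorrQ : Corresponds interpQ GQ GA)
    (t : (PF C arity).M) (a : S) (b : Q)
    (ha : IsDecomposition interpS t a) (hb : IsDecomposition interpQ t b) :
    ∀ i : ι, a ∈ OrderHom.gfp (ruleOp interpS Rules GS) i ↔
      b ∈ OrderHom.gfp (ruleOp interpQ Rules GQ) i := by
  intro i
  exact ⟨gfp_mem_of_common_decomposition interpS hsepS interpQ Rules GS GQ GA hcorrS hcorrQ
      t a b ha hb i,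
    gfp_mem_of_common_decomposition interpQ hsepQ interpS Rules GQ GS GA hcorrQ hcorrS
      t b a hb ha i⟩
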